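/- arXiv:2401.02623 — 4 statements merged into one kernel-verified Lean document; each statement's English description precedes it below -/
import Mathlib

section
/- Let V, Φ : ℝ → ℝ be smooth with V, V′ bounded and Φ, Φ′ bounded. Let f : ℝ × ℝ → ℝ be smooth and such that, locally uniformly in t, the functions x ↦ f(t,x) and all partial derivatives of f up to order two decay rapidly in x. Then the function t ↦ P(t) := ∫_ℝ Φ(x) ∂ₓf(t,x) ∂ₜf(t,x) dx is differentiable and for every t one has P′(t) = − (1/2) ∫_ℝ (∂ₜf)² Φ′ dx − (1/2) ∫_ℝ (∂ₓf)² Φ′ dx + (1/2) ∫_ℝ f² Φ′ dx + (1/2) ∫_ℝ f² (VΦ)′ dx + ∫_ℝ Φ ∂ₓf ( ∂ₜ²f − ∂ₓ²f + f + V f ) dx. -/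
/-!
Write `u`, `u_t`, `u_x`, … for `f` and its partial derivatives. The bound `C / (1 + x²)`, locally
uniform in time, allows differentiation under the integral sign, so that
`P' = ∫ Φ (u_tx u_t + u_x u_tt)`. Pointwise, this integrand minus the integrand of the claimed
right-hand side is the `x`-derivative of
`W = ½ (Φ u_t² + Φ u_x² - Φ u² - V Φ u²)`,
which is integrable together with its derivative, whence `∫ W' = 0`. The calculus part is
`virial_core`, stated for a family of functions related by `HasDerivAt`; the partial derivatives
of a smooth function of two variables are supplied by `dirD`, and the equality of mixed partials
by `dirD_comm`.
-/

open MeasureTheory Real Filter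

/-- A continuous function on the line dominated by a multiple of `1 / (1 + x²)`. -/
def Decays (g : ℝ → ℝ) : Prop :=
  Continuous g ∧ ∃ C : ℝ, ∀ x, |g x| ≤ C * (1 + x ^ 2)⁻¹

/-- A bounded continuous function on the line. -/
def BddCont (g : ℝ → ℝ) : Prop :=
  Continuous g ∧ ∃ C : ℝ, ∀ x, |g x| ≤ C

lemma Decays.bddCont {g : ℝ → ℝ} (h : Decays g) : BddCont g := by
  obtain ⟨hc, C, hC⟩ := h
  refine ⟨hc, C, fun x => (hC x).trans ?_⟩
  have hC0 : 0 ≤ C := by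
    have := (abs_nonneg _).trans (hC 0)
    simpa using this
  have : (1 + x ^ 2)⁻¹ ≤ 1 := inv_le_one_of_one_le₀ (by nlinarith [sq_nonneg x])
  nlinarith

lemma Decays.mul {g h : ℝ → ℝ} (hg : Decays g) (hh : BddCont h) :
    Decays (fun x => g x * h x) := by
  obtain ⟨hc, C, hC⟩ := hg
  obtain ⟨hc', D, hD⟩ := hh
  refine ⟨hc.mul hc', C * D, fun x => ?_⟩
  rw [abs_mul]
  calc |g x| * |h x| ≤ (C * (1 + x ^ 2)⁻¹) * D :=
        mul_le_mul (hC x) (hD x) (abs_nonneg _) ((abs_nonneg _).trans (hC x))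
    _ = C * D * (1 + x ^ 2)⁻¹ := by ring

lemma Decays.integrable {g : ℝ → ℝ} (h : Decays g) : Integrable g := by
  obtain ⟨hc, C, hC⟩ := h
  exact (integrable_inv_one_add_sq.const_mul C).mono' hc.aestronglyMeasurable
    (Eventually.of_forall hC)

/-- The virial identity for functions `u`, `ut`, … that are only assumed to be related by the
listed derivatives, are continuous in `x`, and decay in `x` uniformly for times near `t`. The
single function `utx` plays both mixed partials. -/
lemma virial_core (V Φ V' Φ' : ℝ → ℝ) (u ut ux utt utx uxx : ℝ → ℝ → ℝ)
    (hV : ∀ x, HasDerivAt V (V' x) x) (hΦ : ∀ x, HasDerivAt Φ (Φ' x) x)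
    (bV : BddCont V) (bΦ : BddCont Φ) (bV' : BddCont V') (bΦ' : BddCont Φ')
    (hux : ∀ t x, HasDerivAt (u t) (ux t x) x)
    (huxx : ∀ t x, HasDerivAt (ux t) (uxx t x) x)
    (hutx : ∀ t x, HasDerivAt (ut t) (utx t x) x)
    (hutt : ∀ t x, HasDerivAt (fun s => ut s x) (utt t x) t)
    (huxt : ∀ t x, HasDerivAt (fun s => ux s x) (utx t x) t)
    (cu : ∀ t, Continuous (u t)) (cut : ∀ t, Continuous (ut t)) (cux : ∀ t, Continuous (ux t))
    (cutt : ∀ t, Continuous (utt t)) (cutx : ∀ t, Continuous (utx t))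
    (cuxx : ∀ t, Continuous (uxx t))
    (t C : ℝ)
    (du : ∀ s ∈ Metric.ball t 1, ∀ x, |u s x| ≤ C * (1 + x ^ 2)⁻¹)
    (dut : ∀ s ∈ Metric.ball t 1, ∀ x, |ut s x| ≤ C * (1 + x ^ 2)⁻¹)
    (dux : ∀ s ∈ Metric.ball t 1, ∀ x, |ux s x| ≤ C * (1 + x ^ 2)⁻¹)
    (dutt : ∀ s ∈ Metric.ball t 1, ∀ x, |utt s x| ≤ C * (1 + x ^ 2)⁻¹)
    (dutx : ∀ s ∈ Metric.ball t 1, ∀ x, |utx s x| ≤ C * (1 + x ^ 2)⁻¹)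
    (duxx : ∀ s ∈ Metric.ball t 1, ∀ x, |uxx s x| ≤ C * (1 + x ^ 2)⁻¹) :
    HasDerivAt (fun τ => ∫ x : ℝ, Φ x * ux τ x * ut τ x)
      (-(1 / 2) * (∫ x : ℝ, (ut t x) ^ 2 * Φ' x)
        - (1 / 2) * (∫ x : ℝ, (ux t x) ^ 2 * Φ' x)
        + (1 / 2) * (∫ x : ℝ, (u t x) ^ 2 * Φ' x)
        + (1 / 2) * (∫ x : ℝ, (u t x) ^ 2 * (V' x * Φ x + V x * Φ' x))
        + ∫ x : ℝ, Φ x * ux t x * (utt t x - uxx t x + u t x + V x * u t x)) t := by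
  have ht : t ∈ Metric.ball t 1 := Metric.mem_ball_self one_pos
  have Du : Decays (u t) := ⟨cu t, C, du t ht⟩
  have Dut : Decays (ut t) := ⟨cut t, C, dut t ht⟩
  have Dux : Decays (ux t) := ⟨cux t, C, dux t ht⟩
  have Dutt : Decays (utt t) := ⟨cutt t, C, dutt t ht⟩
  have Dutx : Decays (utx t) := ⟨cutx t, C, dutx t ht⟩
  have Duxx : Decays (uxx t) := ⟨cuxx t, C, duxx t ht⟩
  obtain ⟨cΦ, M, hM⟩ := id bΦ
  have hC0 : 0 ≤ C := by
    have := (abs_nonneg _).trans (du t ht 0)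
    simpa using this
  have hM0 : 0 ≤ M := (abs_nonneg _).trans (hM 0)
  -- differentiation under the integral sign
  have key := (hasDerivAt_integral_of_dominated_loc_of_deriv_le (μ := volume)
    (F := fun τ x => Φ x * ux τ x * ut τ x)
    (F' := fun τ x => Φ x * utx τ x * ut τ x + Φ x * ux τ x * utt τ x)
    (x₀ := t) (bound := fun x => 2 * M * C * C * (1 + x ^ 2)⁻¹)
    (Metric.ball_mem_nhds t one_pos)
    (Eventually.of_forall fun s => ((cΦ.mul (cux s)).mul (cut s)).aestronglyMeasurable)
    (((Dux.mul bΦ).mul Dut.bddCont).integrable.congr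
      (Eventually.of_forall fun x => by ring))
    (((cΦ.mul (cutx t)).mul (cut t)).add
      ((cΦ.mul (cux t)).mul (cutt t))).aestronglyMeasurable
    (Eventually.of_forall fun x s hs => by
      have e1 : (1 + x ^ 2)⁻¹ ≤ 1 := inv_le_one_of_one_le₀ (by nlinarith [sq_nonneg x])
      have e0 : 0 ≤ (1 + x ^ 2)⁻¹ := by positivity
      have hb : ∀ a b : ℝ, |a| ≤ C * (1 + x ^ 2)⁻¹ → |b| ≤ C * (1 + x ^ 2)⁻¹ →
          |Φ x * a * b| ≤ M * C * C * (1 + x ^ 2)⁻¹ := by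
        intro a b ha hb
        have hb' : |b| ≤ C := hb.trans (by nlinarith)
        rw [abs_mul, abs_mul]
        calc |Φ x| * |a| * |b| ≤ M * (C * (1 + x ^ 2)⁻¹) * C := by
              gcongr
              exact hM x
          _ = _ := by ring
      have h1 := hb _ _ (dutx s hs x) (dut s hs x)
      have h2 := hb _ _ (dux s hs x) (dutt s hs x)
      rw [Real.norm_eq_abs]
      refine (abs_add_le _ _).trans ?_
      linarith)
    (integrable_inv_one_add_sq.const_mul _)
    (Eventually.of_forall fun x s _ => by
      exact ((huxt s x).const_mul (Φ x)).fun_mul (hutt s x))).2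
  refine key.congr_deriv ?_
  -- the integrands of the claimed right-hand side
  have I1 : Integrable (fun x => (ut t x) ^ 2 * Φ' x) :=
    ((Dut.mul Dut.bddCont).mul bΦ').integrable.congr (Eventually.of_forall fun x => by ring)
  have I2 : Integrable (fun x => (ux t x) ^ 2 * Φ' x) :=
    ((Dux.mul Dux.bddCont).mul bΦ').integrable.congr (Eventually.of_forall fun x => by ring)
  have I3 : Integrable (fun x => (u t x) ^ 2 * Φ' x) :=
    ((Du.mul Du.bddCont).mul bΦ').integrable.congr (Eventually.of_forall fun x => by ring)
  have I4 : Integrable (fun x => (u t x) ^ 2 * (V' x * Φ x + V x * Φ' x)) :=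
    ((((Du.mul Du.bddCont).mul bV').mul bΦ).integrable.add
      (((Du.mul Du.bddCont).mul bV).mul bΦ').integrable).congr
      (Eventually.of_forall fun x => by simp only [Pi.add_apply]; ring)
  have I5 : Integrable (fun x => Φ x * ux t x * (utt t x - uxx t x + u t x + V x * u t x)) :=
    (((((Dux.mul bΦ).mul Dutt.bddCont).integrable.sub
      ((Dux.mul bΦ).mul Duxx.bddCont).integrable).add
      ((Dux.mul bΦ).mul Du.bddCont).integrable).add
      (((Dux.mul bΦ).mul bV).mul Du.bddCont).integrable).congr
      (Eventually.of_forall fun x => by simp only [Pi.add_apply, Pi.sub_apply]; ring)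
  have I6 : Integrable (fun x => Φ x * utx t x * ut t x + Φ x * ux t x * utt t x) :=
    (((Dutx.mul bΦ).mul Dut.bddCont).integrable.add
      ((Dux.mul bΦ).mul Dutt.bddCont).integrable).congr
      (Eventually.of_forall fun x => by simp only [Pi.add_apply]; ring)
  have IW : Integrable (fun x => 1 / 2 * (Φ x * (ut t x) ^ 2 + Φ x * (ux t x) ^ 2
      - Φ x * (u t x) ^ 2 - V x * Φ x * (u t x) ^ 2)) :=
    ((((((Dut.mul bΦ).mul Dut.bddCont).integrable.add
      ((Dux.mul bΦ).mul Dux.bddCont).integrable).sub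
      ((Du.mul bΦ).mul Du.bddCont).integrable).sub
      (((Du.mul bΦ).mul bV).mul Du.bddCont).integrable).const_mul (1 / 2)).congr
      (Eventually.of_forall fun x => by simp only [Pi.add_apply, Pi.sub_apply]; ring)
  have J1 := I1.const_mul (-(1 / 2))
  have J2 := I2.const_mul (1 / 2)
  have J3 := I3.const_mul (1 / 2)
  have J4 := I4.const_mul (1 / 2)
  have J12 := J1.sub J2
  have J123 := J12.add J3
  have J1234 := J123.add J4
  have J := J1234.add I5
  have hR := integral_add J1234 I5
  rw [integral_add' J123 J4, integral_add' J12 J3, integral_sub' J1 J2, integral_const_mul,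
    integral_const_mul, integral_const_mul, integral_const_mul] at hR
  rw [← hR, ← sub_eq_zero]
  refine (integral_sub I6 J).symm.trans ?_
  refine integral_eq_zero_of_hasDerivAt_of_integrable (fun x => ?_) (I6.sub J) IW
  have dt := (hutx t x).fun_pow 2
  have dx := (huxx t x).fun_pow 2
  have d0 := (hux t x).fun_pow 2
  have := (((((hΦ x).fun_mul dt).fun_add ((hΦ x).fun_mul dx)).fun_sub ((hΦ x).fun_mul d0)).fun_sub
    (((hV x).fun_mul (hΦ x)).fun_mul d0)).const_mul (1 / 2)
  refine this.congr_deriv ?_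
  simp only [Pi.add_apply, Pi.sub_apply]
  push_cast
  ring

/-- The derivative of `G : ℝ × ℝ → ℝ` in the constant direction `v`; the directions `(1, 0)` and
`(0, 1)` give the partial derivatives in time and space. -/
noncomputable def dirD (v : ℝ × ℝ) (G : ℝ × ℝ → ℝ) : ℝ × ℝ → ℝ :=
  fun p => fderiv ℝ G p v

lemma contDiff_dirD {G : ℝ × ℝ → ℝ} (hG : ContDiff ℝ (⊤ : ℕ∞) G) (v : ℝ × ℝ) :
    ContDiff ℝ (⊤ : ℕ∞) (dirD v G) :=
  (hG.fderiv_right (m := (⊤ : ℕ∞)) (by simp)).clm_apply contDiff_const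

lemma hasDerivAt_fst {G : ℝ × ℝ → ℝ} (hG : ContDiff ℝ (⊤ : ℕ∞) G) (t x : ℝ) :
    HasDerivAt (fun s => G (s, x)) (dirD (1, 0) G (t, x)) t :=
  ((hG.differentiable (by simp)) (t, x)).hasFDerivAt.comp_hasDerivAt t
    ((hasDerivAt_id t).prodMk (hasDerivAt_const t x))

lemma hasDerivAt_snd {G : ℝ × ℝ → ℝ} (hG : ContDiff ℝ (⊤ : ℕ∞) G) (t x : ℝ) :
    HasDerivAt (fun y => G (t, y)) (dirD (0, 1) G (t, x)) x :=
  ((hG.differentiable (by simp)) (t, x)).hasFDerivAt.comp_hasDerivAt x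
    ((hasDerivAt_const x t).prodMk (hasDerivAt_id x))

lemma dirD_comm {G : ℝ × ℝ → ℝ} (hG : ContDiff ℝ (⊤ : ℕ∞) G) (v w p : ℝ × ℝ) :
    dirD v (dirD w G) p = dirD w (dirD v G) p := by
  have hd : DifferentiableAt ℝ (fderiv ℝ G) p :=
    ((hG.fderiv_right (m := (⊤ : ℕ∞)) (by simp)).differentiable (by simp)) p
  have h : ∀ a b : ℝ × ℝ, dirD a (dirD b G) p = fderiv ℝ (fderiv ℝ G) p a b := by
    intro a b
    have := (hd.hasFDerivAt.clm_apply (hasFDerivAt_const b p)).fderiv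
    change fderiv ℝ (fun y => fderiv ℝ G y b) p a = _
    rw [this]
    simp
  rw [h, h]
  have h2 : ((2 : ℕ∞) : WithTop ℕ∞) ≤ ((⊤ : ℕ∞) : WithTop ℕ∞) := WithTop.coe_le_coe.2 le_top
  exact (hG.contDiffAt.isSymmSndFDerivAt (by simpa using h2)) v w

theorem virial_identity_true_momentum
    (V Φ : ℝ → ℝ) (f : ℝ → ℝ → ℝ)
    (hV : ContDiff ℝ (⊤ : ℕ∞) V)
    (hVbdd : ∃ M : ℝ, ∀ x, |V x| ≤ M ∧ |deriv V x| ≤ M)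
    (hΦ : ContDiff ℝ (⊤ : ℕ∞) Φ)
    (hΦbdd : ∃ M : ℝ, ∀ x, |Φ x| ≤ M ∧ |deriv Φ x| ≤ M)
    (hf : ContDiff ℝ (⊤ : ℕ∞) (fun p : ℝ × ℝ => f p.1 p.2))
    -- f and its partial derivatives up to order two decay rapidly in x,
    -- locally uniformly in t
    (hdecay : ∀ R : ℝ, 0 < R → ∀ n j k : ℕ, j + k ≤ 2 → ∃ C : ℝ,
      ∀ t : ℝ, |t| ≤ R → ∀ x : ℝ,
        (1 + |x|) ^ n * |deriv^[j] (fun s => deriv^[k] (fun y => f s y) x) t| ≤ C) :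
    ∀ t : ℝ,
      HasDerivAt
        (fun τ => ∫ x : ℝ, Φ x * deriv (fun y => f τ y) x * deriv (fun s => f s x) τ)
        (-(1 / 2) * (∫ x : ℝ, (deriv (fun s => f s x) t) ^ 2 * deriv Φ x)
          - (1 / 2) * (∫ x : ℝ, (deriv (fun y => f t y) x) ^ 2 * deriv Φ x)
          + (1 / 2) * (∫ x : ℝ, (f t x) ^ 2 * deriv Φ x)
          + (1 / 2) * (∫ x : ℝ, (f t x) ^ 2 * deriv (fun y => V y * Φ y) x)
          + ∫ x : ℝ,
              Φ x * deriv (fun y => f t y) x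
                * (deriv (fun s => deriv (fun s' => f s' x) s) t
                    - deriv (fun y => deriv (fun y' => f t y') y) x
                    + f t x + V x * f t x))
        t := by
  intro t
  set G : ℝ × ℝ → ℝ := fun p => f p.1 p.2 with hGdef
  have hGt := contDiff_dirD hf (1, 0)
  have hGx := contDiff_dirD hf (0, 1)
  have et : ∀ t x, deriv (fun s => f s x) t = dirD (1, 0) G (t, x) :=
    fun t x => (hasDerivAt_fst hf t x).deriv
  have ex : ∀ t x, deriv (fun y => f t y) x = dirD (0, 1) G (t, x) :=
    fun t x => (hasDerivAt_snd hf t x).deriv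
  have ett : ∀ t x, deriv (fun s => dirD (1, 0) G (s, x)) t = dirD (1, 0) (dirD (1, 0) G) (t, x) :=
    fun t x => (hasDerivAt_fst hGt t x).deriv
  have exx : ∀ t x, deriv (fun y => dirD (0, 1) G (t, y)) x = dirD (0, 1) (dirD (0, 1) G) (t, x) :=
    fun t x => (hasDerivAt_snd hGx t x).deriv
  have ext' : ∀ t x, deriv (fun s => dirD (0, 1) G (s, x)) t = dirD (0, 1) (dirD (1, 0) G) (t, x) :=
    fun t x => ((hasDerivAt_fst hGx t x).deriv).trans (dirD_comm hf _ _ _)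
  have fet : ∀ x, deriv (fun s => f s x) = fun s => dirD (1, 0) G (s, x) :=
    fun x => funext fun t => et t x
  have fex : ∀ t, deriv (fun y => f t y) = fun y => dirD (0, 1) G (t, y) :=
    fun t => funext fun x => ex t x
  obtain ⟨MV, hMV⟩ := hVbdd
  obtain ⟨MΦ, hMΦ⟩ := hΦbdd
  have hV1 : ∀ x, HasDerivAt V (deriv V x) x :=
    fun x => ((hV.differentiable (by simp)) x).hasDerivAt
  have hΦ1 : ∀ x, HasDerivAt Φ (deriv Φ x) x :=
    fun x => ((hΦ.differentiable (by simp)) x).hasDerivAt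
  have eVΦ : ∀ x, deriv (fun y => V y * Φ y) x = deriv V x * Φ x + V x * deriv Φ x :=
    fun x => ((hV1 x).mul (hΦ1 x)).deriv
  -- the unit ball around `t` lies in `|s| ≤ |t| + 1`, and `1 + x² ≤ (1 + |x|)²`
  have hdec : ∀ j k : ℕ, j + k ≤ 2 → ∃ C : ℝ, ∀ s ∈ Metric.ball t 1, ∀ x : ℝ,
      |deriv^[j] (fun s => deriv^[k] (fun y => f s y) x) s| ≤ C * (1 + x ^ 2)⁻¹ := by
    intro j k hjk
    obtain ⟨C, hC⟩ := hdecay (|t| + 1) (by positivity) 2 j k hjk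
    refine ⟨C, fun s hs x => ?_⟩
    have hs' : |s| ≤ |t| + 1 := by
      rw [Metric.mem_ball, Real.dist_eq] at hs
      have := abs_sub_abs_le_abs_sub s t
      linarith
    have h := hC s hs' x
    rw [← div_eq_mul_inv, le_div_iff₀ (by positivity), mul_comm]
    refine le_trans (mul_le_mul_of_nonneg_right ?_ (abs_nonneg _)) h
    nlinarith [abs_nonneg x, sq_abs x]
  obtain ⟨C0, h0⟩ := hdec 0 0 (by norm_num)
  obtain ⟨C1, h1⟩ := hdec 1 0 (by norm_num)
  obtain ⟨C2, h2⟩ := hdec 0 1 (by norm_num)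
  obtain ⟨C3, h3⟩ := hdec 2 0 (by norm_num)
  obtain ⟨C4, h4⟩ := hdec 1 1 (by norm_num)
  obtain ⟨C5, h5⟩ := hdec 0 2 (by norm_num)
  simp only [Function.iterate_succ, Function.iterate_zero, Function.comp_apply, id_eq, fet, fex, ett,
    exx, ext'] at h0 h1 h2 h3 h4 h5
  have up : ∀ c ∈ [C0, C1, C2, C3, C4, C5], ∀ x a : ℝ, |a| ≤ c * (1 + x ^ 2)⁻¹ →
      |a| ≤ (|C0| + |C1| + |C2| + |C3| + |C4| + |C5|) * (1 + x ^ 2)⁻¹ := by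
    intro c hc x a ha
    refine ha.trans (mul_le_mul_of_nonneg_right ((le_abs_self c).trans ?_) (by positivity))
    have := abs_nonneg C0
    have := abs_nonneg C1
    have := abs_nonneg C2
    have := abs_nonneg C3
    have := abs_nonneg C4
    have := abs_nonneg C5
    simp only [List.mem_cons, List.not_mem_nil, or_false] at hc
    rcases hc with rfl | rfl | rfl | rfl | rfl | rfl <;> linarith
  have cont : ∀ {H : ℝ × ℝ → ℝ}, ContDiff ℝ (⊤ : ℕ∞) H → ∀ s, Continuous fun x => H (s, x) :=
    fun hH s => hH.continuous.comp (by fun_prop)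
  simp only [et, ex, ett, exx, eVΦ]
  exact virial_core V Φ (deriv V) (deriv Φ) f (fun t x => dirD (1, 0) G (t, x))
    (fun t x => dirD (0, 1) G (t, x)) (fun t x => dirD (1, 0) (dirD (1, 0) G) (t, x))
    (fun t x => dirD (0, 1) (dirD (1, 0) G) (t, x)) (fun t x => dirD (0, 1) (dirD (0, 1) G) (t, x))
    hV1 hΦ1 ⟨hV.continuous, MV, fun x => (hMV x).1⟩ ⟨hΦ.continuous, MΦ, fun x => (hMΦ x).1⟩
    ⟨hV.continuous_deriv (by simp), MV, fun x => (hMV x).2⟩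
    ⟨hΦ.continuous_deriv (by simp), MΦ, fun x => (hMΦ x).2⟩
    (hasDerivAt_snd hf) (hasDerivAt_snd hGx) (hasDerivAt_snd hGt) (hasDerivAt_fst hGt)
    (fun s x => (hasDerivAt_fst hGx s x).congr_deriv (dirD_comm hf _ _ _))
    (cont hf) (cont hGt) (cont hGx) (cont (contDiff_dirD hGt _)) (cont (contDiff_dirD hGt _))
    (cont (contDiff_dirD hGx _)) t (|C0| + |C1| + |C2| + |C3| + |C4| + |C5|)
    (fun s hs x => up C0 (by simp) _ _ (h0 s hs x))
    (fun s hs x => up C1 (by simp) _ _ (h1 s hs x))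
    (fun s hs x => up C2 (by simp) _ _ (h2 s hs x))
    (fun s hs x => up C3 (by simp) _ _ (h3 s hs x))
    (fun s hs x => up C4 (by simp) _ _ (h4 s hs x))
    (fun s hs x => up C5 (by simp) _ _ (h5 s hs x))
end

section
/- Define the second-order differential operator SU by (SU g)(x) := g″(x) + 3 tanh(x) g′(x) + 2 g(x). Then for every four-times differentiable function g : ℝ → ℂ and every x ∈ ℝ one has the conjugation (intertwining) identity SU( −g″ + g − 6 sech²(·) g )(x) = −(SU g)″(x) + (SU g)(x); that is, SU ∘ 𝓛 = 𝓛₀ ∘ SU where 𝓛 := −∂ₓ² + 1 − 6 sech²(x) and 𝓛₀ := −∂ₓ² + 1. -/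
/-!
Write `t = tanh`, so that `t' = 1 - t²` and `sech² = 1 - t²`. In these terms the coefficients of
both operators are polynomials in `t`, and two applications of the product rule express each side of
the intertwining identity through `t` and the derivatives of `g` up to order four. The coefficients
of each derivative of `g` then agree as polynomials in `t`.
-/

open Real Complex

noncomputable def sech (x : ℝ) : ℝ := (Real.cosh x)⁻¹

/-- The Darboux conjugation operator `SU = ∂ₓ² + 3 tanh(x) ∂ₓ + 2`. -/
noncomputable def SU (g : ℝ → ℂ) : ℝ → ℂ :=
  fun x => deriv (deriv g) x + 3 * ((Real.tanh x : ℝ) : ℂ) * deriv g x + 2 * g x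

theorem hasDerivAt_tanh_ofReal (x : ℝ) :
    HasDerivAt (fun y : ℝ => ((Real.tanh y : ℝ) : ℂ)) (1 - ((Real.tanh x : ℝ) : ℂ) ^ 2) x := by
  have hc : Real.cosh x ≠ 0 := (Real.cosh_pos x).ne'
  have h : HasDerivAt Real.tanh (1 - Real.tanh x ^ 2) x := by
    have h1 := (Real.hasDerivAt_sinh x).div (Real.hasDerivAt_cosh x) hc
    have e : Real.tanh = Real.sinh / Real.cosh := by
      funext y
      simp [Real.tanh_eq_sinh_div_cosh]
    rw [e]
    refine h1.congr_deriv ?_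
    simp only [Pi.div_apply]
    field_simp
  have h2 := h.ofReal_comp
  push_cast at h2 ⊢
  exact h2

theorem sech_sq_ofReal (x : ℝ) :
    ((sech x : ℝ) : ℂ) ^ 2 = 1 - ((Real.tanh x : ℝ) : ℂ) ^ 2 := by
  have hc : Real.cosh x ≠ 0 := (Real.cosh_pos x).ne'
  have h : sech x ^ 2 = 1 - Real.tanh x ^ 2 := by
    rw [sech, Real.tanh_eq_sinh_div_cosh]
    field_simp
    linarith [Real.cosh_sq x]
  exact_mod_cast congrArg (fun r : ℝ => (r : ℂ)) h

theorem SU_intertwines_L_L0 (g : ℝ → ℂ)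
    (hg1 : Differentiable ℝ g)
    (hg2 : Differentiable ℝ (deriv g))
    (hg3 : Differentiable ℝ (deriv (deriv g)))
    (hg4 : Differentiable ℝ (deriv (deriv (deriv g)))) :
    ∀ x : ℝ,
      SU (fun y => -(deriv (deriv g) y) + g y - 6 * ((sech y : ℝ) : ℂ) ^ 2 * g y) x =
        -(deriv (deriv (SU g)) x) + SU g x := by
  intro x
  obtain ⟨t, ht⟩ : ∃ t : ℝ → ℂ, t = fun y : ℝ => ((Real.tanh y : ℝ) : ℂ) := ⟨_, rfl⟩
  have ht1 : ∀ y, HasDerivAt t (1 - t y ^ 2) y := by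
    intro y
    rw [ht]
    exact hasDerivAt_tanh_ofReal y
  have hSU : ∀ f : ℝ → ℂ,
      SU f = fun y => deriv (deriv f) y + 3 * t y * deriv f y + 2 * f y := by
    intro f
    rw [ht]
    rfl
  have hs : ∀ y, ((sech y : ℝ) : ℂ) ^ 2 = 1 - t y ^ 2 := by
    intro y
    rw [ht]
    exact sech_sq_ofReal y
  simp only [hs, hSU]
  have d0 := fun y => (hg1 y).hasDerivAt
  have d1 := fun y => (hg2 y).hasDerivAt
  have d2 := fun y => (hg3 y).hasDerivAt
  have d3 := fun y => (hg4 y).hasDerivAt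
  generalize deriv (deriv (deriv (deriv g))) = g4 at *
  generalize deriv (deriv (deriv g)) = g3 at *
  generalize deriv (deriv g) = g2 at *
  generalize deriv g = g1 at *
  have ht2 : ∀ y, HasDerivAt (fun z => t z ^ 2) (2 * t y * (1 - t y ^ 2)) y := by
    intro y
    simpa using (ht1 y).fun_pow 2
  have hq : ∀ y, HasDerivAt (fun z => 6 * (1 - t z ^ 2)) (-12 * t y * (1 - t y ^ 2)) y := by
    intro y
    refine (((ht2 y).const_sub 1).const_mul 6).congr_deriv ?_
    ring
  have A1 : deriv (fun y => -g2 y + g y - 6 * (1 - t y ^ 2) * g y) =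
      fun y => -g3 y + g1 y - (-12 * t y * (1 - t y ^ 2) * g y + 6 * (1 - t y ^ 2) * g1 y) := by
    funext y
    exact (((d2 y).fun_neg.fun_add (d0 y)).fun_sub ((hq y).fun_mul (d0 y))).deriv
  have A2 := ((((d3 x).fun_neg.fun_add (d1 x)).fun_sub
    ((((((ht1 x).const_mul (-12)).fun_mul ((ht2 x).const_sub 1)).fun_mul (d0 x))).fun_add
      ((hq x).fun_mul (d1 x))))).deriv
  have B1 : deriv (fun y => g2 y + 3 * t y * g1 y + 2 * g y) =
      fun y => g3 y + (3 * (1 - t y ^ 2) * g1 y + 3 * t y * g2 y) + 2 * g1 y := by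
    funext y
    exact (((d2 y).fun_add (((ht1 y).const_mul 3).fun_mul (d1 y))).fun_add
      ((d0 y).const_mul 2)).deriv
  have B2 := (((d3 x).fun_add (((((ht2 x).const_sub 1).const_mul 3).fun_mul (d1 x)).fun_add
    (((ht1 x).const_mul 3).fun_mul (d2 x)))).fun_add ((d1 x).const_mul 2)).deriv
  rw [A1, B1, A2, B2]
  ring
end

section
/- With the Fourier transform convention 𝓕f(ξ) := (2π)^{−1/2} ∫_ℝ e^{−ixξ} f(x) dx, one has, for every ξ ∈ ℝ, 𝓕[sech](ξ) = √(π/2) · sech(πξ/2). -/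
/-!
The integral `∫ e^{-ixξ} sech x dx` is a Beta integral in disguise. The logistic substitution
`t = σ(2x) = e^x / (2 cosh x)` maps `ℝ` bijectively onto `(0, 1)`, with `1 - t = e^{-2x} t` and
`dt = 2 t (1 - t) dx`. For `u = (1 - iξ)/2` and `v = (1 + iξ)/2`, so that `u + v = 1`, it turns
`B(u, v) = ∫₀¹ t^{u-1} (1-t)^{v-1} dt` into the integral in question
(`integral_exp_mul_sech_eq_betaIntegral`). Since
`B(u, 1 - u) = Γ(u) Γ(1 - u) = π / sin(πu)` by Euler's reflection formula, and
`sin(π/2 - iπξ/2) = cosh(πξ/2)`, the integral equals `π sech(πξ/2)`.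
-/

open Real Complex

open Set MeasureTheory

/-- The substitution `x ↦ σ(2x)` parametrizes `(0, 1)` by the real line. -/
lemma image_sigmoid_two_mul : (fun x : ℝ => Real.sigmoid (2 * x)) '' univ = Ioo 0 1 := by
  rw [← Real.range_sigmoid, image_univ]
  exact (mul_left_surjective₀ (two_ne_zero (α := ℝ))).range_comp Real.sigmoid

lemma sigmoid_two_mul_eq (x : ℝ) :
    Real.sigmoid (2 * x) = Real.exp x * (2 * Real.cosh x)⁻¹ := by
  rw [Real.sigmoid_def, Real.cosh_eq]
  have h : Real.exp (-(2 * x)) = Real.exp (-x) * Real.exp (-x) := by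
    rw [← Real.exp_add]; congr 1; ring
  have h1 : Real.exp x * Real.exp (-x) = 1 := by rw [← Real.exp_add]; simp
  have := Real.exp_pos x
  have := Real.exp_pos (-x)
  rw [h]
  field_simp
  linear_combination -(Real.exp (-x)) * h1

/-- The Beta integrand pulled back along `t = σ(2x)`, Jacobian `2 t (1 - t)` included. -/
lemma beta_integrand_sigmoid (ξ x : ℝ) :
    |2 * (Real.sigmoid (2 * x) * (1 - Real.sigmoid (2 * x)))| •
      (((Real.sigmoid (2 * x) : ℝ) : ℂ) ^ ((1 - I * ξ) / 2 - 1) *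
        (1 - ((Real.sigmoid (2 * x) : ℝ) : ℂ)) ^ ((1 + I * ξ) / 2 - 1)) =
      Complex.exp (-Complex.I * x * ξ) * ((sech x : ℝ) : ℂ) := by
  have hc := Real.cosh_pos x
  -- `L = log (2 cosh x)` turns every factor into a pure exponential.
  obtain ⟨L, hL⟩ : ∃ L : ℝ, Real.exp L = 2 * Real.cosh x := ⟨_, Real.exp_log (by positivity)⟩
  have h1 : Real.sigmoid (2 * x) = Real.exp (x - L) := by
    rw [sigmoid_two_mul_eq, ← hL, Real.exp_sub, div_eq_mul_inv]
  have h2 : 1 - Real.sigmoid (2 * x) = Real.exp (-x - L) := by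
    rw [← Real.sigmoid_neg, ← mul_neg, sigmoid_two_mul_eq, Real.cosh_neg, ← hL, Real.exp_sub,
      div_eq_mul_inv]
  have h3 : sech x = 2 * Real.exp (-L) := by
    rw [sech, Real.exp_neg, hL]; field_simp
  have h2' : 1 - ((Real.sigmoid (2 * x) : ℝ) : ℂ) = ((Real.exp (-x - L) : ℝ) : ℂ) := by
    rw [← h2]; push_cast; rfl
  have hpow (r : ℝ) (s : ℂ) : ((Real.exp r : ℝ) : ℂ) ^ s = Complex.exp (r * s) := by
    rw [Complex.cpow_def_of_ne_zero (by simp [Complex.exp_ne_zero]), ← Complex.ofReal_log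
      (Real.exp_pos _).le, Real.log_exp]
  rw [h2', h2, h1, h3, abs_of_pos (by positivity), hpow, hpow, Complex.real_smul]
  push_cast
  rw [mul_assoc, ← Complex.exp_add, ← Complex.exp_add, ← Complex.exp_add, mul_left_comm,
    ← Complex.exp_add]
  congr 2
  ring

lemma integral_exp_mul_sech_eq_betaIntegral (ξ : ℝ) :
    ∫ x : ℝ, Complex.exp (-Complex.I * x * ξ) * ((sech x : ℝ) : ℂ) =
      betaIntegral ((1 - I * ξ) / 2) ((1 + I * ξ) / 2) := by
  have hderiv (x : ℝ) : HasDerivAt (fun x : ℝ => Real.sigmoid (2 * x))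
      (2 * (Real.sigmoid (2 * x) * (1 - Real.sigmoid (2 * x)))) x := by
    have h := (Real.hasDerivAt_sigmoid (2 * x)).comp x ((hasDerivAt_id x).const_mul 2)
    exact h.congr_deriv (by ring)
  have hinj : InjOn (fun x : ℝ => Real.sigmoid (2 * x)) univ := fun a _ b _ hab => by
    have := Real.sigmoid_injective hab
    linarith
  rw [betaIntegral, intervalIntegral.integral_of_le zero_le_one, integral_Ioc_eq_integral_Ioo,
    ← image_sigmoid_two_mul, integral_image_eq_integral_abs_deriv_smul MeasurableSet.univ
      (fun x _ => (hderiv x).hasDerivWithinAt) hinj, setIntegral_univ]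
  exact integral_congr_ae (.of_forall fun x => (beta_integrand_sigmoid ξ x).symm)

lemma integral_exp_mul_sech (ξ : ℝ) :
    ∫ x : ℝ, Complex.exp (-Complex.I * x * ξ) * ((sech x : ℝ) : ℂ) =
      ((Real.pi * sech (Real.pi * ξ / 2) : ℝ) : ℂ) := by
  have hv : (1 + I * ξ) / 2 = 1 - (1 - I * ξ) / 2 := by ring
  have hsin : Complex.sin (π * ((1 - I * ξ) / 2)) = Complex.cosh (π * ξ / 2) := by
    rw [← Complex.cos_mul_I, ← Complex.sin_pi_div_two_sub]
    congr 1
    ring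
  have hGamma := Complex.Gamma_mul_Gamma_eq_betaIntegral (s := (1 - I * ξ) / 2)
    (t := (1 + I * ξ) / 2) (by simp) (by simp)
  rw [hv, Complex.Gamma_mul_Gamma_one_sub, hsin, add_sub_cancel, Complex.Gamma_one, one_mul,
    ← hv] at hGamma
  rw [integral_exp_mul_sech_eq_betaIntegral, ← hGamma, sech]
  push_cast
  rw [div_eq_mul_inv]

theorem fourier_transform_sech (ξ : ℝ) :
    ((Real.sqrt (2 * Real.pi) : ℝ) : ℂ)⁻¹ *
        (∫ x : ℝ, Complex.exp (-Complex.I * x * ξ) * ((sech x : ℝ) : ℂ)) =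
      ((Real.sqrt (Real.pi / 2) * sech (Real.pi * ξ / 2) : ℝ) : ℂ) := by
  have hsqrt : (Real.sqrt (2 * Real.pi))⁻¹ * Real.pi = Real.sqrt (Real.pi / 2) := by
    have h : Real.sqrt (2 * Real.pi) * Real.sqrt (Real.pi / 2) = Real.pi := by
      rw [← Real.sqrt_mul (by positivity), show 2 * Real.pi * (Real.pi / 2) = Real.pi ^ 2 by ring,
        Real.sqrt_sq Real.pi_pos.le]
    rw [inv_mul_eq_iff_eq_mul₀ (by positivity), h]
  rw [integral_exp_mul_sech, ← hsqrt]
  push_cast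
  ring
end

section
/- Let a ∈ (0,1) and b := √(1 − a²). Define U(t,x) := cosh(ax) + a sinh(ax) − a eˣ cos(bt) and V(t,x) := eˣ ( cosh(ax) − a sinh(ax) − a e^{−x} cos(bt) ). Then on the open set { (t,x) ∈ ℝ² : U(t,x) ≠ 0 }, the function W(t,x) := 4 arctan( V(t,x) / U(t,x) ) satisfies the Sine–Gordon equation ∂ₜ²W − ∂ₓ²W + sin W = 0 (the 'wobbling kink' solution, which converges to the kink K(x) = 4 arctan(eˣ) as a → 0). -/
open Real Filter

/-!
Put `θ = arctan (v / u)`. Where `u ≠ 0`, `θ' = (v' u - v u') / (u² + v²)`, so `(4 θ)''` is an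
explicit rational function of the 2-jets of `u` and `v` (`deriv_deriv_four_arctan_div`), and
`sin (4 θ) = 4 u v (u² - v²) / (u² + v²)²` (`sin_four_arctan_div`). Over the common denominator
`(U² + V²)²` the Sine–Gordon equation for `W = 4 arctan (V / U)` thus becomes a polynomial relation
in `a, b, eˣ, cosh (a x), sinh (a x), cos (b t), sin (b t)`. It follows from `b² = 1 - a²`,
`sin² = 1 - cos²` and `sinh² = cosh² - 1` (`wobbling_kink_identity`).
-/

/-- The numerator of the Sine–Gordon equation vanishes. Here `e, C, S, c, s` stand for `eˣ`,
`cosh (a x)`, `sinh (a x)`, `cos (b t)`, `sin (b t)`, and the partial derivatives of `U` and `V`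
have been replaced by their values. -/
lemma wobbling_kink_identity (a b e C S c s : ℝ) (hb : b ^ 2 = 1 - a ^ 2) (hs : s ^ 2 = 1 - c ^ 2)
    (hS : S ^ 2 = C ^ 2 - 1) (U V : ℝ) (hU : U = C + a * S - a * e * c)
    (hV : V = e * (C - a * S) - a * c) :
    ((a * b ^ 2 * c - e * (1 - a ^ 2) * (C + a * S)) * U
      - V * (a * b ^ 2 * e * c - (a ^ 2 * C + a ^ 3 * S - a * e * c))) * (U ^ 2 + V ^ 2)
      - 2 * (a * b * s * U - V * (a * b * e * s)) * (U * (a * b * e * s) + V * (a * b * s))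
      + 2 * (e * (1 - a ^ 2) * C * U - V * (a * S + a ^ 2 * C - a * e * c))
        * (U * (a * S + a ^ 2 * C - a * e * c) + V * (e * (1 - a ^ 2) * C))
      + U * V * (U ^ 2 - V ^ 2) = 0 := by
  subst hU hV
  grind

lemma deriv_deriv_four_arctan_div (u v u1 v1 : ℝ → ℝ) (u2 v2 x : ℝ) (hu : ∀ y, HasDerivAt u (u1 y) y)
    (hv : ∀ y, HasDerivAt v (v1 y) y) (hu1 : HasDerivAt u1 u2 x) (hv1 : HasDerivAt v1 v2 x)
    (hx : u x ≠ 0) :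
    deriv (fun y => deriv (fun y' => 4 * arctan (v y' / u y')) y) x =
      4 * ((v2 * u x - v x * u2) * (u x ^ 2 + v x ^ 2)
        - 2 * (v1 x * u x - v x * u1 x) * (u x * u1 x + v x * v1 x)) / (u x ^ 2 + v x ^ 2) ^ 2 := by
  have hpos : ∀ y, u y ≠ 0 → u y ^ 2 + v y ^ 2 ≠ 0 := fun y hy => by positivity
  -- The formula for the first derivative is needed on a neighbourhood of `x`, where `u ≠ 0` persists.
  have h1 : (fun y => deriv (fun y' => 4 * arctan (v y' / u y')) y) =ᶠ[nhds x]
      fun y => 4 * ((v1 y * u y - v y * u1 y) / (u y ^ 2 + v y ^ 2)) := by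
    filter_upwards [(hu x).continuousAt.eventually_ne hx] with y hy
    refine ((((hv y).div (hu y) hy).arctan).const_mul 4).deriv.trans ?_
    have := hpos y hy
    simp only [Pi.div_apply]
    have h3 : 1 + (v y / u y) ^ 2 = (u y ^ 2 + v y ^ 2) / u y ^ 2 := by field_simp
    rw [h3]
    field_simp
  rw [h1.deriv_eq]
  have h4 := ((((hv1.mul (hu x)).sub ((hv x).mul hu1)).div
    (((hu x).pow 2).add ((hv x).pow 2)) (hpos x hx)).const_mul 4)
  refine h4.deriv.trans ?_
  have := hpos x hx
  simp
  field_simp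
  ring

lemma sin_four_arctan_div (u v : ℝ) (hu : u ≠ 0) :
    sin (4 * arctan (v / u)) = 4 * (u * v * (u ^ 2 - v ^ 2)) / (u ^ 2 + v ^ 2) ^ 2 := by
  have hpos : u ^ 2 + v ^ 2 ≠ 0 := by positivity
  have h3 : 1 + (v / u) ^ 2 = (u ^ 2 + v ^ 2) / u ^ 2 := by field_simp
  have hc := cos_sq_arctan (v / u)
  rw [h3] at hc
  have hs : sin (arctan (v / u)) = v / u * cos (arctan (v / u)) := by
    have h := tan_mul_cos (cos_arctan_pos (v / u)).ne'
    rw [tan_arctan] at h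
    exact h.symm
  rw [show 4 * arctan (v / u) = 2 * (2 * arctan (v / u)) by ring, sin_two_mul, sin_two_mul,
    cos_two_mul, hs]
  have : 2 * (2 * (v / u * cos (arctan (v / u))) * cos (arctan (v / u))) *
    (2 * cos (arctan (v / u)) ^ 2 - 1) = 4 * (v / u) * cos (arctan (v / u)) ^ 2 *
    (2 * cos (arctan (v / u)) ^ 2 - 1) := by ring
  rw [this, hc]
  field_simp
  ring

theorem sine_Gordon_wobbling_kink (a : ℝ) (ha : a ∈ Set.Ioo (0 : ℝ) 1)
    (b : ℝ) (hb : b = Real.sqrt (1 - a ^ 2))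
    (U V W : ℝ → ℝ → ℝ)
    (hU : ∀ t x, U t x = Real.cosh (a * x) + a * Real.sinh (a * x)
      - a * Real.exp x * Real.cos (b * t))
    (hV : ∀ t x, V t x = Real.exp x * (Real.cosh (a * x) - a * Real.sinh (a * x)
      - a * Real.exp (-x) * Real.cos (b * t)))
    (hW : ∀ t x, W t x = 4 * Real.arctan (V t x / U t x)) :
    ∀ t x : ℝ, U t x ≠ 0 →
      deriv (fun s => deriv (fun s' => W s' x) s) t
        - deriv (fun y => deriv (fun y' => W t y') y) x
        + Real.sin (W t x) = 0 := by
  intro t x hUx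
  have hb2 : b ^ 2 = 1 - a ^ 2 := by
    rw [hb, sq_sqrt]
    nlinarith [ha.1, ha.2]
  have hV' : ∀ t x, V t x = exp x * (cosh (a * x) - a * sinh (a * x)) - a * cos (b * t) := by
    intro t x
    have h : exp x * exp (-x) = 1 := by rw [← exp_add]; simp
    rw [hV]
    linear_combination (- a * cos (b * t)) * h
  have hbt : ∀ s, HasDerivAt (fun s => b * s) b s := fun s => by
    simpa using (hasDerivAt_id s).const_mul b
  have hax : ∀ y, HasDerivAt (fun y => a * y) a y := fun s => by
    simpa using (hasDerivAt_id s).const_mul a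
  have hC : ∀ y, HasDerivAt (fun y => cosh (a * y)) (sinh (a * y) * a) y := fun y => (hax y).cosh
  have hS : ∀ y, HasDerivAt (fun y => sinh (a * y)) (cosh (a * y) * a) y := fun y => (hax y).sinh
  have hc : ∀ s, HasDerivAt (fun s => cos (b * s)) (-sin (b * s) * b) s := fun y => (hbt y).cos
  have hs : ∀ s, HasDerivAt (fun s => sin (b * s)) (cos (b * s) * b) s := fun y => (hbt y).sin
  have hUt : ∀ s, HasDerivAt (fun s => U s x) (a * b * exp x * sin (b * s)) s := fun s => by
    simp only [hU]
    exact (((hc s).const_mul (a * exp x)).const_sub _).congr_deriv (by ring)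
  have hVt : ∀ s, HasDerivAt (fun s => V s x) (a * b * sin (b * s)) s := fun s => by
    simp only [hV']
    exact (((hc s).const_mul a).const_sub _).congr_deriv (by ring)
  have hUtt : HasDerivAt (fun s => a * b * exp x * sin (b * s))
      (a * b ^ 2 * exp x * cos (b * t)) t :=
    ((hs t).const_mul _).congr_deriv (by ring)
  have hVtt : HasDerivAt (fun s => a * b * sin (b * s)) (a * b ^ 2 * cos (b * t)) t :=
    ((hs t).const_mul _).congr_deriv (by ring)
  have hUx' : ∀ y, HasDerivAt (fun y => U t y)
      (a * sinh (a * y) + a ^ 2 * cosh (a * y) - a * exp y * cos (b * t)) y := fun y => by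
    simp only [hU]
    exact (((hC y).add ((hS y).const_mul a)).sub
      (((hasDerivAt_exp y).const_mul a).mul_const _)).congr_deriv (by ring)
  have hVx : ∀ y, HasDerivAt (fun y => V t y) (exp y * (1 - a ^ 2) * cosh (a * y)) y := fun y => by
    simp only [hV']
    exact (((hasDerivAt_exp y).mul ((hC y).sub ((hS y).const_mul a))).sub_const _).congr_deriv
      (by simp; ring)
  have hUxx : HasDerivAt
      (fun y => a * sinh (a * y) + a ^ 2 * cosh (a * y) - a * exp y * cos (b * t))
      (a ^ 2 * cosh (a * x) + a ^ 3 * sinh (a * x) - a * exp x * cos (b * t)) x :=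
    ((((hS x).const_mul a).add ((hC x).const_mul (a ^ 2))).sub
      (((hasDerivAt_exp x).const_mul a).mul_const _)).congr_deriv (by ring)
  have hVxx : HasDerivAt (fun y => exp y * (1 - a ^ 2) * cosh (a * y))
      (exp x * (1 - a ^ 2) * (cosh (a * x) + a * sinh (a * x))) x :=
    (((hasDerivAt_exp x).mul_const _).mul (hC x)).congr_deriv (by ring)
  have key := wobbling_kink_identity a b (exp x) (cosh (a * x)) (sinh (a * x)) (cos (b * t)) (sin (b * t)) hb2
    (sin_sq _) (sinh_sq _) (U t x) (V t x) (hU t x) (hV' t x)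
  simp only [hW]
  rw [deriv_deriv_four_arctan_div _ _ _ _ _ _ t hUt hVt hUtt hVtt hUx, deriv_deriv_four_arctan_div _ _ _ _ _ _ x hUx' hVx hUxx hVxx hUx,
    sin_four_arctan_div _ _ hUx, ← sub_div, ← add_div, div_eq_zero_iff]
  left
  linear_combination 4 * key
end
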